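/- Every d-regular graph G on n vertices with d ≥ 1 admits a permutation π moving all n vertices (an n-permutation) that preserves at least n/(d+1) − 1 edges, i.e., dist(G,G_π) ≤ m − (n/(d+1) − 1). -/

import Mathlib

/-!
Take a matching of maximum size. By maximality every neighbour of an unmatched vertex is matched,
and no matching edge `uv` has distinct unmatched vertices `a ∼ u` and `b ∼ v`, since `a u v b` would
be an augmenting path. So the unmatched neighbours of one end of `uv` contain those of the other,
and each matching edge sees at most `d - 1` unmatched vertices. Hence `k` matching edges give
`n ≤ k (2 + (d - 1)) = k (d + 1)`. Swapping the ends of every matching edge preserves these edges,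
and the unmatched vertices can be permuted cyclically without fixed points unless there is exactly
one of them, in which case one matching edge is given up.
-/

open Equiv Finset

section Perm

variable {V : Type*} [DecidableEq V] {σ : Perm V} {u v : V}

theorem disjoint_swap_of_apply_eq_self (hu : σ u = u) (hv : σ v = v) : σ.Disjoint (swap u v) := by
  intro x
  by_contra! h
  rcases eq_or_eq_of_swap_apply_ne_self h.2 with rfl | rfl
  exacts [h.1 hu, h.1 hv]

variable [Fintype V]

theorem card_support_mul_swap_of_apply_eq_self (hu : σ u = u) (hv : σ v = v) (huv : u ≠ v) :
    #(σ * swap u v).support = #σ.support + 2 := by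
  rw [(disjoint_swap_of_apply_eq_self hu hv).card_support_mul, Perm.card_support_swap huv]

theorem exists_mem_derangements_eqOn_support (hσ : #σ.supportᶜ ≠ 1) :
    ∃ π ∈ derangements V, Set.EqOn π σ σ.support := by
  obtain ⟨f, hf, hfs⟩ := exists_cycleOn σ.supportᶜ
  have hdisj : σ.Disjoint f :=
    Perm.disjoint_iff_disjoint_support.2 (disjoint_compl_right.mono_right hfs)
  refine ⟨σ * f, fun v hv => ?_, fun v hv => ?_⟩
  · obtain ⟨hσv, hfv⟩ := hdisj.mul_apply_eq_iff.1 hv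
    have hmem : v ∈ σ.supportᶜ := by simpa using hσv
    have hnontrivial : σ.supportᶜ.Nontrivial :=
      one_lt_card_iff_nontrivial.1 (by have := card_pos.2 ⟨v, hmem⟩; omega)
    exact hf.apply_ne hnontrivial hmem hfv
  · have hfv : f v = v := (hdisj v).resolve_left (Perm.mem_support.1 hv)
    rw [Perm.mul_apply, hfv]

end Perm

/-- The encoding of a matching of `G` by the permutation that swaps the two ends of each matching
edge and fixes the unmatched vertices. For finite graphs `σ.support` is the set of matched
vertices, so its cardinality is twice the number of matching edges. -/
structure IsMatchingPerm {V : Type*} (G : SimpleGraph V) (σ : Perm V) : Prop where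
  involutive : Function.Involutive σ
  adj : ∀ ⦃v⦄, σ v ≠ v → G.Adj v (σ v)

namespace IsMatchingPerm

variable {V : Type*} {G : SimpleGraph V} {σ τ : Perm V} {u v : V}

theorem one : IsMatchingPerm G 1 :=
  ⟨fun _ => rfl, fun _ h => absurd rfl h⟩

theorem mul (hσ : IsMatchingPerm G σ) (hτ : IsMatchingPerm G τ) (h : σ.Disjoint τ) :
    IsMatchingPerm G (σ * τ) where
  involutive v := by
    have hcomm : σ (τ (σ (τ v))) = σ (σ (τ (τ v))) :=
      congrArg σ (DFunLike.congr_fun h.commute.eq (τ v)).symm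
    simpa only [Perm.mul_apply, hτ.involutive v, hσ.involutive v] using hcomm
  adj v hv := by
    rcases h v with hσv | hτv
    · have hστ : (σ * τ) v = τ v := by rw [h.commute.eq, Perm.mul_apply, hσv]
      rw [hστ] at hv ⊢
      exact hτ.adj hv
    · rw [Perm.mul_apply, hτv] at hv ⊢
      exact hσ.adj hv

variable [DecidableEq V]

theorem swap_of_adj (huv : G.Adj u v) : IsMatchingPerm G (swap u v) where
  involutive := swap_apply_self u v
  adj x hx := by
    rcases eq_or_eq_of_swap_apply_ne_self hx with rfl | rfl
    · simpa using huv
    · simpa using huv.symm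

theorem mul_swap (hσ : IsMatchingPerm G σ) (hu : σ u = u) (hv : σ v = v) (huv : G.Adj u v) :
    IsMatchingPerm G (σ * swap u v) :=
  hσ.mul (swap_of_adj huv) (disjoint_swap_of_apply_eq_self hu hv)

theorem mul_swap_apply_self (hσ : IsMatchingPerm G σ) (u : V) :
    IsMatchingPerm G (σ * swap u (σ u)) := by
  have happly (x : V) :
      (σ * swap u (σ u)) x = x ∨ (σ * swap u (σ u)) x = σ x ∧ (σ * swap u (σ u)) (σ x) = x := by
    by_cases hxu : x = u
    · simp [hxu, hσ.involutive u]
    by_cases hxσ : x = σ u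
    · simp [hxσ]
    have hσx : σ x ≠ u := fun h => hxσ (by rw [← h, hσ.involutive x])
    simp [swap_apply_of_ne_of_ne, hxu, hxσ, hσx, hσ.involutive x]
  refine ⟨fun x => ?_, fun x hx => ?_⟩
  · rcases happly x with h | ⟨h, h'⟩
    · rw [h, h]
    · rw [h, h']
  · have h := ((happly x).resolve_left hx).1
    rw [h] at hx ⊢
    exact hσ.adj hx

variable [Fintype V]

theorem card_support_mul_swap_apply_self_add_two (hσ : IsMatchingPerm G σ) (hu : σ u ≠ u) :
    #(σ * swap u (σ u)).support + 2 = #σ.support := by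
  rw [← card_support_mul_swap_of_apply_eq_self (u := u) (v := σ u) (by simp [hσ.involutive u])
    (by simp) hu.symm, mul_swap_mul_self]

theorem exists_card_compl_support_ne_one (hσ : IsMatchingPerm G σ) (hV : Fintype.card V ≠ 1) :
    ∃ τ, IsMatchingPerm G τ ∧ #τ.supportᶜ ≠ 1 ∧ #σ.support ≤ #τ.support + 2 := by
  by_cases h : #σ.supportᶜ = 1
  · have hcard := card_add_card_compl σ.support
    obtain ⟨u, hu⟩ : σ.support.Nonempty := card_pos.1 (by omega)
    have hdel := hσ.card_support_mul_swap_apply_self_add_two (Perm.mem_support.1 hu)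
    refine ⟨σ * swap u (σ u), hσ.mul_swap_apply_self u, ?_, hdel.ge⟩
    rw [card_compl]
    omega
  · exact ⟨σ, hσ, h, Nat.le_add_right _ _⟩

theorem card_support_le_two_mul_card_preserved [DecidableRel G.Adj] {π : Perm V}
    (hσ : IsMatchingPerm G σ) (hπ : Set.EqOn π σ σ.support) :
    #σ.support ≤ 2 * #{e ∈ G.edgeFinset | e.map π ∈ G.edgeFinset} := by
  refine card_le_mul_card_image_of_maps_to (f := fun v => s(v, σ v)) (fun v hv => ?_) 2
    (fun e _ => ?_)
  · have hadj : G.Adj v (σ v) := hσ.adj (Perm.mem_support.1 hv)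
    have hmap : s(v, σ v).map π = s(σ v, v) := by
      rw [Sym2.map_mk, hπ hv, hπ (Perm.apply_mem_support.2 hv), hσ.involutive v]
    simp only [mem_filter, hmap, SimpleGraph.mem_edgeFinset, SimpleGraph.mem_edgeSet]
    exact ⟨hadj, hadj.symm⟩
  · induction e with | _ a b =>
    have hends : {v ∈ σ.support | s(v, σ v) = s(a, b)} ⊆ {a, b} := fun v hv => by
      simp only [mem_filter, Sym2.eq_iff] at hv
      simp only [mem_insert, mem_singleton]
      tauto
    exact (card_le_card hends).trans card_le_two

end IsMatchingPerm

/-- A matching permutation encoding a matching with as many edges as possible. -/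
abbrev IsMaximumMatchingPerm {V : Type*} [Fintype V] [DecidableEq V] (G : SimpleGraph V)
    (σ : Perm V) : Prop :=
  MaximalFor (IsMatchingPerm G) (fun σ => #σ.support) σ

theorem exists_isMaximumMatchingPerm {V : Type*} [Fintype V] [DecidableEq V] (G : SimpleGraph V) :
    ∃ σ, IsMaximumMatchingPerm G σ :=
  (Set.toFinite {σ | IsMatchingPerm G σ}).exists_maximalFor _ _ ⟨1, .one⟩

namespace IsMaximumMatchingPerm

variable {V : Type*} [Fintype V] [DecidableEq V] {G : SimpleGraph V} {σ : Perm V}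

theorem not_adj_of_apply_eq_self (hσ : IsMaximumMatchingPerm G σ) {a b : V} (ha : σ a = a)
    (hb : σ b = b) : ¬ G.Adj a b := by
  intro hab
  have hcard := card_support_mul_swap_of_apply_eq_self ha hb hab.ne
  exact hσ.not_gt (hσ.prop.mul_swap ha hb hab) (by simp [hcard])

theorem eq_of_adj_of_adj_apply (hσ : IsMaximumMatchingPerm G σ) {u a b : V} (hu : σ u ≠ u)
    (ha : σ a = a) (hb : σ b = b) (hau : G.Adj a u) (hbu : G.Adj b (σ u)) : a = b := by
  by_contra hab
  have hσu : σ (σ u) = u := hσ.prop.involutive u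
  have hau' : a ≠ σ u := by rintro rfl; exact hu (σ.injective ha)
  have hbu' : b ≠ u := by rintro rfl; exact hu hb
  set τ := σ * swap u (σ u) with hτ
  have hτu : τ u = u := by simp [hτ, hσu]
  have hτσu : τ (σ u) = σ u := by simp [hτ]
  have hτa : τ a = a := by simp [hτ, swap_apply_of_ne_of_ne hau.ne hau', ha]
  have hτb : τ b = b := by simp [hτ, swap_apply_of_ne_of_ne hbu' hbu.ne, hb]
  set ρ := τ * swap a u with hρ
  have hρσu : ρ (σ u) = σ u := by simp [hρ, swap_apply_of_ne_of_ne hau'.symm hu, hτσu]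
  have hρb : ρ b = b := by simp [hρ, swap_apply_of_ne_of_ne (Ne.symm hab) hbu', hτb]
  have haug : IsMatchingPerm G (ρ * swap b (σ u)) :=
    ((hσ.prop.mul_swap_apply_self u).mul_swap hτa hτu hau).mul_swap hρb hρσu hbu
  have hcardτ : #τ.support + 2 = #σ.support :=
    hσ.prop.card_support_mul_swap_apply_self_add_two hu
  have hcardρ : #ρ.support = #τ.support + 2 :=
    card_support_mul_swap_of_apply_eq_self hτa hτu hau.ne
  have hcard := card_support_mul_swap_of_apply_eq_self hρb hρσu hbu.ne
  have hlt : #σ.support < #(ρ * swap b (σ u)).support := by omega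
  exact hσ.not_gt haug hlt

variable [DecidableRel G.Adj]

theorem card_unmatched_neighbors_le (hσ : IsMaximumMatchingPerm G σ) {u : V} (hu : σ u ≠ u)
    {d : ℕ} (hd : ∀ v, G.degree v ≤ d) :
    #{a ∈ σ.supportᶜ | G.Adj a u ∨ G.Adj a (σ u)} ≤ d - 1 := by
  have hadj : G.Adj u (σ u) := hσ.prop.adj hu
  have hcard {x y : V} (hxy : G.Adj x y) : #((G.neighborFinset x).erase y) ≤ d - 1 := by
    rw [card_erase_of_mem ((G.mem_neighborFinset x y).2 hxy), G.card_neighborFinset_eq_degree]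
    exact Nat.sub_le_sub_right (hd x) 1
  have hnested : (∀ a, σ a = a → G.Adj a (σ u) → G.Adj a u) ∨
      ∀ a, σ a = a → G.Adj a u → G.Adj a (σ u) := by
    by_contra! ⟨⟨b, hb, hbv, hbu⟩, a, ha, hau, -⟩
    exact hbu (hσ.eq_of_adj_of_adj_apply hu ha hb hau hbv ▸ hau)
  have hne {a : V} (ha : σ a = a) : a ≠ u ∧ a ≠ σ u :=
    ⟨by rintro rfl; exact hu ha, by rintro rfl; exact hu (σ.injective ha)⟩
  rcases hnested with h | h
  · refine (card_le_card fun a ha => ?_).trans (hcard hadj)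
    simp only [mem_filter, mem_compl, Perm.mem_support, not_not] at ha
    rw [mem_erase, SimpleGraph.mem_neighborFinset]
    exact ⟨(hne ha.1).2, (ha.2.elim id (h a ha.1)).symm⟩
  · refine (card_le_card fun a ha => ?_).trans (hcard hadj.symm)
    simp only [mem_filter, mem_compl, Perm.mem_support, not_not] at ha
    rw [mem_erase, SimpleGraph.mem_neighborFinset]
    exact ⟨(hne ha.1).1, (ha.2.elim (h a ha.1) id).symm⟩

theorem card_compl_support_mul_two_le (hσ : IsMaximumMatchingPerm G σ) {d : ℕ}
    (hpos : ∀ v, 0 < G.degree v) (hd : ∀ v, G.degree v ≤ d) :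
    #σ.supportᶜ * 2 ≤ #σ.support * (d - 1) := by
  refine card_mul_le_card_mul (fun a u => G.Adj a u ∨ G.Adj a (σ u)) (fun a ha => ?_)
    (fun u hu => hσ.card_unmatched_neighbors_le (Perm.mem_support.1 hu) hd)
  obtain ⟨u, hau⟩ := (G.degree_pos_iff_exists_adj a).1 (hpos a)
  have hu : σ u ≠ u := fun hu => hσ.not_adj_of_apply_eq_self (by simpa using ha) hu hau
  rw [← card_pair hu]
  refine card_le_card ?_
  simp [insert_subset_iff, mem_bipartiteAbove, hu, hu.symm, hau, hσ.prop.involutive u]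

theorem two_mul_card_le_card_support_mul (hσ : IsMaximumMatchingPerm G σ) {d : ℕ}
    (hpos : ∀ v, 0 < G.degree v) (hd : ∀ v, G.degree v ≤ d) :
    2 * Fintype.card V ≤ #σ.support * (d + 1) := by
  rcases isEmpty_or_nonempty V with _ | ⟨⟨v⟩⟩
  · simp
  · obtain ⟨c, rfl⟩ := Nat.exists_eq_add_of_le' ((hpos v).trans_le (hd v))
    have hunmatched := hσ.card_compl_support_mul_two_le hpos hd
    rw [Nat.add_sub_cancel] at hunmatched
    rw [← card_add_card_compl σ.support]
    linarith

end IsMaximumMatchingPerm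

theorem exists_mem_derangements_card_le_mul {V : Type*} [Fintype V] [DecidableEq V]
    (G : SimpleGraph V) [DecidableRel G.Adj] {d : ℕ}
    (hpos : ∀ v, 0 < G.degree v) (hd : ∀ v, G.degree v ≤ d) :
    ∃ π ∈ derangements V,
      Fintype.card V ≤ (#{e ∈ G.edgeFinset | e.map π ∈ G.edgeFinset} + 1) * (d + 1) := by
  obtain ⟨σ, hσ⟩ := exists_isMaximumMatchingPerm G
  have hmatched := hσ.two_mul_card_le_card_support_mul hpos hd
  have hV : Fintype.card V ≠ 1 := fun h => by
    obtain ⟨v, -⟩ := Fintype.card_eq_one_iff.1 h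
    have hlt := G.degree_lt_card_verts v
    have := hpos v
    omega
  obtain ⟨τ, hτ, hcompl, hστ⟩ := hσ.prop.exists_card_compl_support_ne_one hV
  obtain ⟨π, hπ, hπτ⟩ := exists_mem_derangements_eqOn_support hcompl
  refine ⟨π, hπ, ?_⟩
  have hpreserved := hτ.card_support_le_two_mul_card_preserved hπτ
  set k := #{e ∈ G.edgeFinset | e.map π ∈ G.edgeFinset}
  have hσk : #σ.support ≤ 2 * (k + 1) := by omega
  have hmul := Nat.mul_le_mul_right (d + 1) hσk
  linarith

theorem stmt7_general {V : Type*} [Fintype V] [DecidableEq V]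
    (G : SimpleGraph V) [DecidableRel G.Adj] (d : ℕ)
    (hpos : ∀ v, 0 < G.degree v) (hd : ∀ v, G.degree v ≤ d) :
    ∃ π : Equiv.Perm V, (∀ v, π v ≠ v) ∧
      ((G.edgeFinset.filter fun e => e.map π ∉ G.edgeFinset).card : ℚ)
        ≤ (G.edgeFinset.card : ℚ) - ((Fintype.card V : ℚ) / (d + 1) - 1) := by
  obtain ⟨π, hπ, hcard⟩ := exists_mem_derangements_card_le_mul G hpos hd
  refine ⟨π, hπ, ?_⟩
  have hdiv : (Fintype.card V : ℚ) / (d + 1)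
      ≤ #{e ∈ G.edgeFinset | e.map π ∈ G.edgeFinset} + 1 := by
    rw [div_le_iff₀ (by positivity)]
    exact_mod_cast hcard
  rw [← card_filter_add_card_filter_not (s := G.edgeFinset) (fun e => e.map π ∈ G.edgeFinset)]
  push_cast
  linarith

/-- Every `d`-regular graph on `n` vertices with `d ≥ 1` admits a
fixed-point-free permutation `π` of its vertices (an `n`-permutation) that
preserves at least `n/(d+1) - 1` edges, i.e.
`dist(G,G_π) ≤ m - (n/(d+1) - 1)` where `m` is the number of edges. -/
theorem stmt7 {V : Type*} [Fintype V] [DecidableEq V]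
    (G : SimpleGraph V) [DecidableRel G.Adj] (n d : ℕ)
    (hn : Fintype.card V = n) (hd : 1 ≤ d) (hreg : G.IsRegularOfDegree d) :
    ∃ π : Equiv.Perm V, (∀ v, π v ≠ v) ∧
      ((G.edgeFinset.filter fun e => e.map π ∉ G.edgeFinset).card : ℚ)
        ≤ (G.edgeFinset.card : ℚ) - ((n : ℚ) / (d + 1) - 1) := by
  subst hn
  exact stmt7_general G d (fun v => hreg v ▸ hd) (fun v => (hreg v).le)
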